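/- Let P be an n × n column-stochastic real matrix (nonnegative entries, each column summing to 1) in block form P = [[P₁, P₂],[0, P₄]], where P₁ is k × k, P₂ is k × m, the lower-left block is zero, and P₄ is m × m, and suppose every column of P₂ has at least one strictly positive entry. Then for every probability vector π⁰ ∈ ℝⁿ (nonnegative entries summing to 1), the total mass of P^t π⁰ on the last m coordinates tends to 0 as t → ∞; equivalently, lim_{t→∞} Σ_{i=1}^{k} (P^t π⁰)_i = 1. -/

import Mathlib

open Matrix Filter

/-- The total mass of `A *ᵥ v` is the sum of the entries of `v` weighted by the column sums
of `A`. -/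
theorem sum_mulVec_eq_sum_colSum_mul {ι κ R : Type*} [Fintype ι] [Fintype κ]
    [NonUnitalNonAssocSemiring R] (A : Matrix ι κ R) (v : κ → R) :
    ∑ i, (A *ᵥ v) i = ∑ j, (∑ i, A i j) * v j := by
  simp only [Matrix.mulVec, dotProduct, Finset.sum_mul]
  exact Finset.sum_comm

/-- Finitely many nonnegative reals below `1` have a common bound in `[0, 1)`. -/
theorem exists_uniform_bound_lt_one {ι : Type*} [Finite ι] (f : ι → ℝ)
    (h0 : ∀ i, 0 ≤ f i) (h1 : ∀ i, f i < 1) : ∃ c, 0 ≤ c ∧ c < 1 ∧ ∀ i, f i ≤ c := by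
  cases isEmpty_or_nonempty ι
  · exact ⟨0, le_rfl, one_pos, isEmptyElim⟩
  · obtain ⟨i, hi⟩ := Finite.exists_max f
    exact ⟨f i, h0 i, h1 i, hi⟩

/-- If every column sum of `A` is at most `c`, then `A` scales the mass of a nonnegative vector
by at most `c`. -/
theorem sum_mulVec_le_mul_sum {ι κ : Type*} [Fintype ι] [Fintype κ] {A : Matrix ι κ ℝ} {c : ℝ}
    (hA : ∀ j, ∑ i, A i j ≤ c) {v : κ → ℝ} (hv : ∀ j, 0 ≤ v j) :
    ∑ i, (A *ᵥ v) i ≤ c * ∑ j, v j := by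
  rw [sum_mulVec_eq_sum_colSum_mul, Finset.mul_sum]
  exact Finset.sum_le_sum fun j _ => mul_le_mul_of_nonneg_right (hA j) (hv j)

/-- A nonnegative matrix whose columns sum to `1` preserves nonnegativity and total mass under
iteration. -/
theorem colStochastic_pow_mulVec {ι : Type*} [Fintype ι] [DecidableEq ι] {A : Matrix ι ι ℝ}
    (hnn : ∀ i j, 0 ≤ A i j) (hcol : ∀ j, ∑ i, A i j = 1) {v : ι → ℝ} (hv : ∀ i, 0 ≤ v i)
    (t : ℕ) : (∀ i, 0 ≤ ((A ^ t) *ᵥ v) i) ∧ ∑ i, ((A ^ t) *ᵥ v) i = ∑ i, v i := by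
  induction t with
  | zero => simpa using hv
  | succ t ih =>
    rw [pow_succ', ← Matrix.mulVec_mulVec]
    refine ⟨fun i => Finset.sum_nonneg fun j _ => mul_nonneg (hnn i j) (ih.1 j), ?_⟩
    simp only [sum_mulVec_eq_sum_colSum_mul A, hcol, one_mul, ih.2]

/-- For a column-stochastic matrix in block form `[[P₁, P₂],[0, P₄]]` in
which every column of `P₂` has a strictly positive entry, and any probability vector
`π⁰`, the total mass of `P^t π⁰` on the first `k` coordinates tends to 1. -/
theorem block_stochastic_mass_tendsto_one {k m : ℕ}
    (P₁ : Matrix (Fin k) (Fin k) ℝ) (P₂ : Matrix (Fin k) (Fin m) ℝ)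
    (P₄ : Matrix (Fin m) (Fin m) ℝ)
    (hnn : ∀ i j, 0 ≤ Matrix.fromBlocks P₁ P₂ 0 P₄ i j)
    (hcol : ∀ j, ∑ i, Matrix.fromBlocks P₁ P₂ 0 P₄ i j = 1)
    (hP₂ : ∀ j : Fin m, ∃ i : Fin k, 0 < P₂ i j)
    (π0 : Fin k ⊕ Fin m → ℝ) (hπ0nn : ∀ i, 0 ≤ π0 i) (hπ0sum : ∑ i, π0 i = 1) :
    Tendsto
      (fun t => ∑ i : Fin k, (((Matrix.fromBlocks P₁ P₂ 0 P₄) ^ t) *ᵥ π0) (Sum.inl i))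
      atTop (nhds 1) := by
  set P := Matrix.fromBlocks P₁ P₂ 0 P₄ with hP
  have hP₄nn : ∀ i j, 0 ≤ P₄ i j := fun i j => hnn (Sum.inr i) (Sum.inr j)
  have hP₄col : ∀ j, ∑ i, P₄ i j < 1 := fun j => by
    obtain ⟨i, hi⟩ := hP₂ j
    have hsum : ∑ i, P₂ i j + ∑ i, P₄ i j = 1 := by
      simpa [hP, Fintype.sum_sum_type] using hcol (Sum.inr j)
    have hpos : 0 < ∑ i, P₂ i j :=
      Finset.sum_pos' (fun i _ => hnn (Sum.inl i) (Sum.inr j)) ⟨i, Finset.mem_univ i, hi⟩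
    linarith
  obtain ⟨c, hc0, hc1, hc⟩ := exists_uniform_bound_lt_one (fun j => ∑ i, P₄ i j)
    (fun j => Finset.sum_nonneg fun i _ => hP₄nn i j) hP₄col
  have hiter := colStochastic_pow_mulVec hnn hcol hπ0nn
  have hbound : ∀ t, ∑ i, ((P ^ t) *ᵥ π0) (Sum.inr i) ≤ c ^ t * ∑ i, π0 (Sum.inr i) := by
    intro t
    induction t with
    | zero => simp
    | succ t ih =>
      have hstep : ∀ i, ((P ^ (t + 1)) *ᵥ π0) (Sum.inr i)
          = (P₄ *ᵥ fun j => ((P ^ t) *ᵥ π0) (Sum.inr j)) i := fun i => by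
        rw [pow_succ', ← Matrix.mulVec_mulVec, hP, Matrix.fromBlocks_mulVec]
        simp [Function.comp_def]
      calc ∑ i, ((P ^ (t + 1)) *ᵥ π0) (Sum.inr i)
          = ∑ i, (P₄ *ᵥ fun j => ((P ^ t) *ᵥ π0) (Sum.inr j)) i :=
            Finset.sum_congr rfl fun i _ => hstep i
        _ ≤ c * ∑ j, ((P ^ t) *ᵥ π0) (Sum.inr j) :=
            sum_mulVec_le_mul_sum hc fun j => (hiter t).1 (Sum.inr j)
        _ ≤ c * (c ^ t * ∑ i, π0 (Sum.inr i)) := mul_le_mul_of_nonneg_left ih hc0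
        _ = c ^ (t + 1) * ∑ i, π0 (Sum.inr i) := by ring
  have htail : Tendsto (fun t => ∑ i, ((P ^ t) *ᵥ π0) (Sum.inr i)) atTop (nhds 0) :=
    squeeze_zero (fun t => Finset.sum_nonneg fun i _ => (hiter t).1 (Sum.inr i)) hbound
      (by simpa using (tendsto_pow_atTop_nhds_zero_of_lt_one hc0 hc1).mul_const _)
  have hmass : ∀ t, ∑ i, ((P ^ t) *ᵥ π0) (Sum.inl i)
      = 1 - ∑ i, ((P ^ t) *ᵥ π0) (Sum.inr i) := fun t => by
    rw [← hπ0sum, ← (hiter t).2, Fintype.sum_sum_type, add_sub_cancel_right]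
  simpa only [hmass, sub_zero] using htail.const_sub 1
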